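/- arXiv:2511.19138 — 2 statements merged into one kernel-verified Lean document; each statement's English description precedes it below -/
import Mathlib

section
/- Let H be a graph with a cut vertex v whose removal results in the disjoint union of two (possibly disconnected) subgraphs H' and H''. Suppose D is a divisor on H of rank r such that the divisor D|_{H'} - v has rank -1 as a divisor on the subgraph H' ∪ {v}. Then D|_{H'' ∪ {v}} has rank at least r as a divisor on the subgraph H'' ∪ {v}. -/
open Finset

variable {V : Type*} [Fintype V] [DecidableEq V]

/-- A finite loopless multigraph on vertex type `V`, given by symmetric edge multiplicities. -/
structure Multigraph (V : Type*) [Fintype V] [DecidableEq V] where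
  mult : V → V → ℕ
  symm : ∀ u v, mult u v = mult v u
  loopless : ∀ v, mult v v = 0

namespace Multigraph

def Adj (G : Multigraph V) (u v : V) : Prop := 0 < G.mult u v

/-- A graph is connected. -/
def Connected (G : Multigraph V) : Prop :=
  Nonempty V ∧ ∀ u v : V, Relation.ReflTransGen G.Adj u v

/-- Valence of a vertex. -/
def valence (G : Multigraph V) (v : V) : ℕ := ∑ u, G.mult v u

/-- The Laplacian applied to an integer-valued function on the vertices. -/
def laplacian (G : Multigraph V) (f : V → ℤ) : V → ℤ :=
  fun w => ∑ u, (G.mult w u : ℤ) * (f w - f u)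

/-- Degree of a divisor. -/
def degree (D : V → ℤ) : ℤ := ∑ v, D v

/-- A divisor is effective if all coefficients are nonnegative. -/
def Effective (D : V → ℤ) : Prop := ∀ v, 0 ≤ D v

/-- Linear equivalence of divisors: they differ by a sequence of chip-firing moves,
equivalently by a Laplacian of an integer function. -/
def LinEquiv (G : Multigraph V) (D D' : V → ℤ) : Prop :=
  ∃ f : V → ℤ, D' = D - G.laplacian f

/-- A divisor is winnable if it is linearly equivalent to an effective divisor. -/
def Winnable (G : Multigraph V) (D : V → ℤ) : Prop :=
  ∃ E : V → ℤ, Effective E ∧ G.LinEquiv D E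

/-- The Baker–Norine rank of a divisor: the largest `r` such that `D - E` is winnable for
every effective divisor `E` of degree `r` (the defining set contains all negative integers,
and its supremum is `-1` precisely when `D` itself is not winnable). -/
noncomputable def rank (G : Multigraph V) (D : V → ℤ) : ℤ :=
  sSup {r : ℤ | ∀ E : V → ℤ, Effective E → degree E = r → G.Winnable (fun w => D w - E w)}

/-- The `k`-th gonality of a graph: the smallest degree of a divisor of rank `k`. -/
noncomputable def gonality (G : Multigraph V) (k : ℤ) : ℤ :=
  sInf {d : ℤ | ∃ D : V → ℤ, G.rank D = k ∧ degree D = d}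

/-- A graph is gonality-tight if its second gonality exceeds its first by exactly 1. -/
def GonalityTight (G : Multigraph V) : Prop :=
  G.gonality 2 = G.gonality 1 + 1

/-- A divisor realises the `k`-th gonality if it has rank `k` and degree `gon_k(G)`. -/
def Realises (G : Multigraph V) (k : ℤ) (D : V → ℤ) : Prop :=
  G.rank D = k ∧ degree D = G.gonality k

/-- A divisor is `v`-reduced: nonnegative away from `v`, and set-firing any nonempty set of
vertices not containing `v` creates a negative coefficient inside the set. -/
def Reduced (G : Multigraph V) (v : V) (D : V → ℤ) : Prop :=
  (∀ w, w ≠ v → 0 ≤ D w) ∧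
    ∀ U : Finset V, U.Nonempty → v ∉ U →
      ∃ w ∈ U, D w - ∑ u ∈ Uᶜ, (G.mult w u : ℤ) < 0

/-- The genus (first Betti number) of a graph: `|E| - |V| + 1`. -/
def genus (G : Multigraph V) : ℤ :=
  ((∑ u, ∑ v, G.mult u v : ℕ) : ℤ) / 2 - Fintype.card V + 1

/-- The canonical divisor of a graph. -/
def canonical (G : Multigraph V) : V → ℤ :=
  fun w => (G.valence w : ℤ) - 2

/-- The subgraph induced on a set `S` of vertices (with all edges among `S`). -/
def induce (G : Multigraph V) (S : Finset V) : Multigraph {x // x ∈ S} where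
  mult a b := G.mult a b
  symm a b := G.symm a b
  loopless a := G.loopless a

/-- `G.SeparatedBy u w v` means every path from `w` to `v` passes through `u`. -/
def SeparatedBy (G : Multigraph V) (u w v : V) : Prop :=
  ¬ Relation.ReflTransGen (fun x y => G.Adj x y ∧ x ≠ u ∧ y ≠ u) w v

end Multigraph

/-- Size of the `i`-th level of a quasi-banana graph: level `0` has a single vertex. -/
def qbSize (q : ℕ → ℕ) (i : ℕ) : ℕ := if i = 0 then 1 else q i

/-- `ℓ` is a quasi-banana labelling of `G` exhibiting `G ≅ QB_m(q_1, …, q_m)`: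
`ℓ` is a bijection onto the pairs `(i, j)` with `i ≤ m`, `1 ≤ j ≤ qbSize q i`
(vertex `u_{i,j}` is the vertex labelled `(i,j)`), and the edge multiplicities are:
one edge between distinct vertices of the same level, `(∑_{k=1}^{i} q_k) + 2` edges
between `u_{i,1}` and each `u_{i+1,j}`, and no other edges. -/
def Multigraph.IsQBLabelling (G : Multigraph V) (m : ℕ) (q : ℕ → ℕ) (ℓ : V → ℕ × ℕ) : Prop :=
  (∀ i, 1 ≤ i → i ≤ m → 0 < q i) ∧
  Function.Injective ℓ ∧
  (∀ v : V, (ℓ v).1 ≤ m ∧ 1 ≤ (ℓ v).2 ∧ (ℓ v).2 ≤ qbSize q (ℓ v).1) ∧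
  (∀ i j : ℕ, i ≤ m → 1 ≤ j → j ≤ qbSize q i → ∃ v, ℓ v = (i, j)) ∧
  (∀ v w : V, v ≠ w → G.mult v w =
    if (ℓ v).1 = (ℓ w).1 then 1
    else if (ℓ v).1 + 1 = (ℓ w).1 ∧ (ℓ v).2 = 1 then (∑ i ∈ Finset.Icc 1 (ℓ v).1, q i) + 2
    else if (ℓ w).1 + 1 = (ℓ v).1 ∧ (ℓ w).2 = 1 then (∑ i ∈ Finset.Icc 1 (ℓ w).1, q i) + 2
    else 0)

/-- A graph is a quasi-banana graph if it is isomorphic to some `QB_m(N)`. -/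
def Multigraph.IsQuasiBanana (G : Multigraph V) : Prop :=
  ∃ (m : ℕ) (q : ℕ → ℕ) (ℓ : V → ℕ × ℕ), G.IsQBLabelling m q ℓ

/-- The graph obtained from `G'` by attaching a complete graph `K_n`: `n` new vertices
pairwise joined by exactly one edge, each joined to `v` by exactly `k+1` edges. -/
def attachComplete (G' : Multigraph V) (v : V) (k n : ℕ) : Multigraph (V ⊕ Fin n) where
  mult x y :=
    match x, y with
    | Sum.inl a, Sum.inl b => G'.mult a b
    | Sum.inl a, Sum.inr _ => if a = v then k + 1 else 0
    | Sum.inr _, Sum.inl b => if b = v then k + 1 else 0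
    | Sum.inr i, Sum.inr j => if i = j then 0 else 1
  symm := by
    rintro (a | i) (b | j)
    · exact G'.symm a b
    · rfl
    · rfl
    · by_cases h : i = j
      · simp [h]
      · simp [h, Ne.symm h]
  loopless := by
    rintro (a | i)
    · exact G'.loopless a
    · simp

namespace Multigraph

/-- The set whose supremum is the rank. -/
def rankSet (G : Multigraph V) (D : V → ℤ) : Set ℤ :=
  {r : ℤ | ∀ E : V → ℤ, Effective E → degree E = r → G.Winnable (fun w => D w - E w)}

lemma degree_laplacian (G : Multigraph V) (f : V → ℤ) : degree (G.laplacian f) = 0 := by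
  have h : degree (G.laplacian f) = - degree (G.laplacian f) := by
    unfold degree laplacian
    conv_lhs => rw [Finset.sum_comm]
    rw [← Finset.sum_neg_distrib]
    refine Finset.sum_congr rfl fun x _ => ?_
    rw [← Finset.sum_neg_distrib]
    refine Finset.sum_congr rfl fun y _ => ?_
    rw [G.symm y x]
    ring
  omega

lemma degree_nonneg_of_winnable (G : Multigraph V) (D : V → ℤ) (h : G.Winnable D) :
    0 ≤ degree D := by
  obtain ⟨E, hE, f, hf⟩ := h
  have h1 : degree E = degree D := by
    have := G.degree_laplacian f
    rw [hf]
    unfold degree at *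
    simp [this]
  rw [← h1]
  exact Finset.sum_nonneg fun x _ => hE x

lemma neg_mem_rankSet (G : Multigraph V) (D : V → ℤ) (r : ℤ) (hr : r < 0) :
    r ∈ G.rankSet D := by
  intro E hE hd
  have : 0 ≤ degree E := Finset.sum_nonneg fun x _ => hE x
  omega

lemma bddAbove_rankSet (G : Multigraph V) [Nonempty V] (D : V → ℤ) :
    BddAbove (G.rankSet D) := by
  refine ⟨max 0 (degree D), fun r hr => ?_⟩
  by_contra hlt
  push Not at hlt
  obtain ⟨h0, h1⟩ := max_lt_iff.1 hlt
  obtain ⟨x⟩ := ‹Nonempty V›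
  have hd : degree (Pi.single x r : V → ℤ) = r := by simp [degree]
  have hw := hr (Pi.single x r) (fun w => by
    by_cases h : w = x
    · subst h; simp; omega
    · simp [h]) hd
  have := G.degree_nonneg_of_winnable _ hw
  have h2 : degree (fun w => D w - (Pi.single x r : V → ℤ) w) = degree D - r := by
    rw [← hd]
    unfold degree
    simp
  omega

lemma rank_mem_rankSet (G : Multigraph V) [Nonempty V] (D : V → ℤ) :
    G.rank D ∈ G.rankSet D :=
  Int.csSup_mem ⟨-1, G.neg_mem_rankSet D (-1) (by norm_num)⟩ (G.bddAbove_rankSet D)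

lemma le_rank (G : Multigraph V) [Nonempty V] (D : V → ℤ) (r : ℤ) (h : r ∈ G.rankSet D) :
    r ≤ G.rank D :=
  le_csSup (G.bddAbove_rankSet D) h

lemma not_winnable_of_rank (G : Multigraph V) [Nonempty V] (D : V → ℤ) (h : G.rank D = -1) :
    ¬ G.Winnable D := by
  intro hw
  have := G.le_rank D 0 (fun E hE hd => by
    have h0 : ∀ w, E w = 0 := fun w =>
      (Finset.sum_eq_zero_iff_of_nonneg (fun x _ => hE x)).1 hd w (Finset.mem_univ w)
    simpa [h0] using hw)
  omega

lemma laplacian_induce (G : Multigraph V) (S : Finset V) (f : V → ℤ) (w : {x // x ∈ S}) :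
    (G.induce S).laplacian (fun x => f x.1) w
      = ∑ u ∈ S, (G.mult w.1 u : ℤ) * (f w.1 - f u) := by
  unfold laplacian induce
  exact Finset.sum_coe_sort S (fun u => (G.mult w.1 u : ℤ) * (f w.1 - f u))

end Multigraph

/-- If `v` is a cut vertex whose removal splits `H` into `H'` (vertex set
`A`) and `H''` (vertex set `B`), `D` has rank `r` on `H`, and `D|_{H'} - v` has rank `-1`
on `H' ∪ {v}`, then `D|_{H'' ∪ {v}}` has rank at least `r` on `H'' ∪ {v}`. -/
theorem stmt7 (H : Multigraph V) (hH : H.Connected)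
    (v : V) (A B : Finset V)
    (hAB : A ∪ B = Finset.univ.erase v) (hdisj : Disjoint A B)
    (hnoedge : ∀ a ∈ A, ∀ b ∈ B, H.mult a b = 0)
    (D : V → ℤ) (r : ℤ) (hr : H.rank D = r)
    (hA : (H.induce (insert v A)).rank
        (fun x => if x.1 = v then -1 else D x.1) = -1) :
    r ≤ (H.induce (insert v B)).rank (fun x => D x.1) := by
  have hvA : v ∉ A := fun h => by
    have := Finset.mem_union_left B h
    rw [hAB] at this; simp at this
  have hvB : v ∉ B := fun h => by
    have := Finset.mem_union_right A h
    rw [hAB] at this; simp at this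
  have hsum : ∀ g : V → ℤ, ∑ u, g u = g v + ∑ u ∈ A, g u + ∑ u ∈ B, g u := by
    intro g
    rw [← Finset.add_sum_erase Finset.univ g (Finset.mem_univ v), ← hAB,
      Finset.sum_union hdisj]
    ring
  haveI : Nonempty V := ⟨v⟩
  haveI : Nonempty {x // x ∈ insert v A} := ⟨⟨v, Finset.mem_insert_self v A⟩⟩
  haveI : Nonempty {x // x ∈ insert v B} := ⟨⟨v, Finset.mem_insert_self v B⟩⟩
  have hnw := Multigraph.not_winnable_of_rank _ _ hA
  have hmem := H.rank_mem_rankSet D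
  rw [hr] at hmem
  apply Multigraph.le_rank
  intro E hE hd
  -- extend `E` by zero
  let E' : V → ℤ := fun x => if h : x ∈ insert v B then E ⟨x, h⟩ else 0
  have hE'val : ∀ x : {x // x ∈ insert v B}, E' x.1 = E x := fun x => by
    simp only [E', dif_pos x.2]
  have hE'A : ∀ a ∈ A, E' a = 0 := fun a ha => by
    have : a ∉ insert v B := by
      rw [Finset.mem_insert]
      rintro (rfl | h)
      · exact hvA ha
      · exact Finset.disjoint_left.1 hdisj ha h
    simp only [E', dif_neg this]
  have hE' : Multigraph.Effective E' := fun x => by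
    by_cases h : x ∈ insert v B
    · simp only [E', dif_pos h]; exact hE _
    · simp only [E', dif_neg h]; exact le_rfl
  have hdE' : Multigraph.degree E' = r := by
    rw [← hd]
    unfold Multigraph.degree
    rw [hsum, Finset.sum_eq_zero hE'A]
    have h1 : ∑ x, E x = ∑ x ∈ insert v B, E' x := by
      rw [← Finset.sum_coe_sort (insert v B) E']
      exact Finset.sum_congr rfl fun x _ => (hE'val x).symm
    rw [h1, Finset.sum_insert hvB]
    ring
  obtain ⟨F, hF, f, hf⟩ := hmem E' hE' hdE'
  have hFx : ∀ x, F x = D x - E' x - H.laplacian f x := fun x => by rw [hf]; rfl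
  -- the Laplacian at vertices of the two sides
  have hLA : ∀ a ∈ A, H.laplacian f a
      = ∑ u ∈ insert v A, (H.mult a u : ℤ) * (f a - f u) := by
    intro a ha
    unfold Multigraph.laplacian
    rw [hsum, Finset.sum_insert hvA, Finset.sum_eq_zero (s := B), add_zero]
    intro b hb
    simp [hnoedge a ha b hb]
  have hLB : ∀ b ∈ B, H.laplacian f b
      = ∑ u ∈ insert v B, (H.mult b u : ℤ) * (f b - f u) := by
    intro b hb
    unfold Multigraph.laplacian
    rw [hsum, Finset.sum_insert hvB, Finset.sum_eq_zero (s := A), add_zero]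
    intro a ha
    simp [H.symm b a, hnoedge a ha b hb]
  have hLv : H.laplacian f v = ∑ u ∈ insert v A, (H.mult v u : ℤ) * (f v - f u)
      + ∑ u ∈ insert v B, (H.mult v u : ℤ) * (f v - f u) := by
    unfold Multigraph.laplacian
    rw [hsum, Finset.sum_insert hvA, Finset.sum_insert hvB, H.loopless]
    push_cast
    ring
  have hkey : 0 ≤ ∑ u ∈ insert v A, (H.mult v u : ℤ) * (f v - f u) := by
    by_contra hneg
    apply hnw
    refine ⟨_, ?_, (fun x => f x.1), rfl⟩
    rintro ⟨x, hx⟩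
    rw [Pi.sub_apply, Multigraph.laplacian_induce]
    rcases Finset.mem_insert.1 hx with rfl | hxA
    · simp only [if_true]
      omega
    · have hne : x ≠ v := fun h => hvA (h ▸ hxA)
      simp only [if_neg hne]
      have h1 := hF x
      rw [hFx, hE'A x hxA, hLA x hxA] at h1
      omega
  refine ⟨_, ?_, (fun x => f x.1), rfl⟩
  rintro ⟨x, hx⟩
  rw [Pi.sub_apply, Multigraph.laplacian_induce, ← hE'val]
  have h1 := hF x
  rw [hFx] at h1
  rcases Finset.mem_insert.1 hx with rfl | hxB
  · rw [hLv] at h1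
    simp only
    omega
  · rw [hLB x hxB] at h1
    exact h1
end

section
/- Let k ≥ 0 be an integer and let G' be a graph of genus C(k,2) with a vertex v such that for every integer 1 ≤ l ≤ k-2 one has r_{G'}(l(k+1)·v) ≥ l(l+3)/2. Let n ≥ 1 and let G be the graph obtained from G' by attaching a complete graph K_n: add n new vertices pairwise joined by exactly one edge, and join v to each of the n new vertices by exactly k+1 edges. Then: (1) the genus of G is C(k+n, 2); (2) for every vertex u of K_n, the divisor (k+n-2)(k+n+1)·u is linearly equivalent to the canonical divisor K_G; (3) for every integer -2 ≤ l ≤ k+n and every vertex u of K_n, the rank of l(k+n+1)·u on G is at least l(l+3)/2. -/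
open Finset

variable {V : Type*} [Fintype V] [DecidableEq V]

namespace Multigraph

lemma lap_add (G : Multigraph V) (f g : V → ℤ) (w : V) :
    G.laplacian (fun x => f x + g x) w = G.laplacian f w + G.laplacian g w := by
  simp only [laplacian, ← Finset.sum_add_distrib]
  exact Finset.sum_congr rfl fun _ _ => by ring

lemma lap_smul (G : Multigraph V) (c : ℤ) (f : V → ℤ) (w : V) :
    G.laplacian (fun x => c * f x) w = c * G.laplacian f w := by
  simp only [laplacian, Finset.mul_sum]
  exact Finset.sum_congr rfl fun _ _ => by ring

lemma lap_sum {ι : Type*} (G : Multigraph V) (s : Finset ι) (f : ι → V → ℤ) (w : V) :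
    G.laplacian (fun x => ∑ i ∈ s, f i x) w = ∑ i ∈ s, G.laplacian (f i) w := by
  simp only [laplacian]
  rw [Finset.sum_comm]
  refine Finset.sum_congr rfl fun u _ => ?_
  rw [← Finset.sum_sub_distrib, Finset.mul_sum]

lemma sum_lap (G : Multigraph V) (f : V → ℤ) : ∑ w, G.laplacian f w = 0 := by
  have h : ∑ w, G.laplacian f w = - ∑ w, G.laplacian f w := by
    conv_lhs => simp only [laplacian]
    rw [Finset.sum_comm, ← Finset.sum_neg_distrib]
    refine Finset.sum_congr rfl fun w _ => ?_
    simp only [laplacian]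
    rw [← Finset.sum_neg_distrib]
    refine Finset.sum_congr rfl fun u _ => ?_
    rw [G.symm u w]; ring
  linarith

lemma winnable_iff (G : Multigraph V) (D : V → ℤ) :
    G.Winnable D ↔ ∃ f : V → ℤ, ∀ w, G.laplacian f w ≤ D w := by
  constructor
  · rintro ⟨E, hE, f, rfl⟩
    exact ⟨f, fun w => by have := hE w; simp at this; linarith⟩
  · rintro ⟨f, hf⟩
    exact ⟨D - G.laplacian f, fun w => by simp [hf w], f, rfl⟩

lemma winnable_add (G : Multigraph V) {D D' F : V → ℤ} (h : G.Winnable D) (h' : G.Winnable D')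
    (hF : ∀ w, F w = D w + D' w) : G.Winnable F := by
  rw [winnable_iff] at *
  obtain ⟨f, hf⟩ := h
  obtain ⟨g, hg⟩ := h'
  refine ⟨fun x => f x + g x, fun w => ?_⟩
  rw [lap_add, hF]
  exact add_le_add (hf w) (hg w)

lemma winnable_of_nonneg (G : Multigraph V) {D : V → ℤ} (h : ∀ w, 0 ≤ D w) : G.Winnable D := by
  rw [winnable_iff]
  exact ⟨fun _ => 0, fun w => by simpa [laplacian] using h w⟩

lemma winnable_degree (G : Multigraph V) {D : V → ℤ} (h : G.Winnable D) : 0 ≤ ∑ w, D w := by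
  rw [winnable_iff] at h
  obtain ⟨f, hf⟩ := h
  rw [← G.sum_lap f]
  exact Finset.sum_le_sum fun w _ => hf w

lemma le_rank_iff (G : Multigraph V) [Nonempty V] (D : V → ℤ) (r : ℤ) :
    r ≤ G.rank D ↔ ∀ E : V → ℤ, Effective E → ∑ w, E w ≤ r → G.Winnable (fun w => D w - E w) := by
  obtain ⟨v⟩ := ‹Nonempty V›
  set S := {r : ℤ | ∀ E : V → ℤ, Effective E → degree E = r → G.Winnable (fun w => D w - E w)}
    with hS
  have hbdd : BddAbove S := by
    refine ⟨max 0 (∑ w, D w), fun r hr => ?_⟩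
    by_cases h0 : r ≤ 0
    · exact le_max_of_le_left h0
    · refine le_max_of_le_right ?_
      have := G.winnable_degree (hr (fun w => if w = v then r else 0)
        (fun w => by dsimp only; split_ifs <;> omega) (by simp [degree]))
      simp at this
      exact this
  have hne : S.Nonempty := by
    refine ⟨-1, fun E hE hd => ?_⟩
    have : 0 ≤ degree E := Finset.sum_nonneg fun w _ => hE w
    omega
  constructor
  · intro h E hE hd
    have hmem : sSup S ∈ S := Int.csSup_mem hne hbdd
    have hle : ∑ w, E w ≤ sSup S := hd.trans h
    have := hmem (fun w => E w + if w = v then (sSup S - ∑ w, E w) else 0)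
      (fun w => by have := hE w; dsimp only; split_ifs <;> omega)
      (by simp [degree, Finset.sum_add_distrib])
    refine G.winnable_add this
      (G.winnable_of_nonneg (D := fun w => if w = v then (sSup S - ∑ w, E w) else 0) ?_) ?_
    · intro w; split_ifs <;> omega
    · intro w; ring
  · intro h
    exact le_csSup hbdd fun E hE hd => h E hE (le_of_eq hd)

/-- The divisor attached to an ordering. -/
def nu (G : Multigraph V) (p : V → ℤ) (w : V) : ℤ :=
  (∑ u, if p u < p w then (G.mult w u : ℤ) else 0) - 1

lemma nu_add (G : Multigraph V) (p : V → ℤ) (hp : Function.Injective p) (w : V) :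
    G.nu p w + G.nu (fun x => - p x) w = G.canonical w := by
  have : ∑ u, (G.mult w u : ℤ) = (∑ u, if p u < p w then (G.mult w u : ℤ) else 0) +
      ∑ u, if - p u < - p w then (G.mult w u : ℤ) else 0 := by
    rw [← Finset.sum_add_distrib]
    refine Finset.sum_congr rfl fun u _ => ?_
    rcases lt_trichotomy (p u) (p w) with h | h | h
    · simp [h, h.le]
    · have := hp h
      subst this
      simp [G.loopless]
    · simp [h, h.le]
  simp only [nu, canonical, valence]
  push_cast
  linarith

lemma sum_nu_neg (G : Multigraph V) (p : V → ℤ) :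
    ∑ w, G.nu (fun x => - p x) w = ∑ w, G.nu p w := by
  simp only [nu, Finset.sum_sub_distrib]
  rw [Finset.sum_comm]
  congr 1
  refine Finset.sum_congr rfl fun w _ => Finset.sum_congr rfl fun u _ => ?_
  rw [G.symm u w]
  simp

lemma sum_nu (G : Multigraph V) (p : V → ℤ) (hp : Function.Injective p) :
    ∑ w, G.nu p w = G.genus - 1 := by
  have h1 : ∑ w, (G.nu p w + G.nu (fun x => - p x) w) = ∑ w, G.canonical w :=
    Finset.sum_congr rfl fun w _ => G.nu_add p hp w
  rw [Finset.sum_add_distrib, sum_nu_neg] at h1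
  have h2 : ∑ w, G.canonical w = ((∑ u, ∑ v, G.mult u v : ℕ) : ℤ) - 2 * Fintype.card V := by
    simp [canonical, valence, Finset.sum_sub_distrib, mul_comm]
  rw [genus]
  omega

lemma sum_canonical (G : Multigraph V) : ∑ w, G.canonical w = 2 * G.genus - 2 := by
  let p : V → ℤ := fun x => ((Fintype.equivFin V x : ℕ) : ℤ)
  have hp : Function.Injective p := fun a b h => by
    simpa [p, Fin.val_inj] using h
  rw [← Finset.sum_congr rfl fun w _ => G.nu_add p hp w, Finset.sum_add_distrib, sum_nu_neg,
    sum_nu _ _ hp]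
  ring

lemma nu_not_winnable (G : Multigraph V) [Nonempty V] (p : V → ℤ) : ¬ G.Winnable (G.nu p) := by
  rw [winnable_iff]
  rintro ⟨f, hf⟩
  obtain ⟨x, -, hx⟩ := Finset.exists_max_image (univ : Finset V) f univ_nonempty
  obtain ⟨w, hw, hmin⟩ := Finset.exists_min_image (univ.filter fun y => f y = f x) p ⟨x, by simp⟩
  simp only [mem_filter, mem_univ, true_and, true_implies] at hw hmin hx
  have h := hf w
  have : (∑ u, if p u < p w then (G.mult w u : ℤ) else 0) ≤ G.laplacian f w := by
    refine Finset.sum_le_sum fun u _ => ?_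
    have h1 := hx u
    split_ifs with h2
    · have : f u ≠ f x := fun h3 => by have := hmin u h3; omega
      have h4 : 1 ≤ f w - f u := by omega
      nlinarith [Int.natCast_nonneg (G.mult w u)]
    · exact mul_nonneg (by positivity) (by omega)
  simp only [nu] at h
  omega

lemma exists_neg (G : Multigraph V) (hG : G.Connected) (q w : V) :
    ∃ f : V → ℤ, (∀ x, x ≠ q → G.laplacian f x ≤ 0) ∧ (w ≠ q → G.laplacian f w < 0) := by
  have hind : ∀ (y x : V), G.laplacian (fun z => if z = y then 1 else 0) x =
      if x = y then (G.valence y : ℤ) else - (G.mult x y : ℤ) := by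
    intro y x
    split_ifs with h
    · subst h
      simp only [laplacian, valence]
      push_cast
      refine Finset.sum_congr rfl fun u _ => ?_
      by_cases hu : u = x
      · subst hu; simp [G.loopless]
      · simp [hu]
    · simp [laplacian, h]
  induction hG.2 q w with
  | refl => exact ⟨fun _ => 0, fun x _ => by simp [laplacian], fun h => absurd rfl h⟩
  | @tail b c _ hbc ih =>
    have hpos : 0 < G.mult c b := by rw [G.symm]; exact hbc
    have hne : c ≠ b := by rintro rfl; rw [G.loopless] at hpos; exact lt_irrefl _ hpos
    obtain ⟨f, hf, hfb⟩ := ih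
    refine ⟨fun x => (G.valence b : ℤ) * f x + if x = b then 1 else 0, fun x hx => ?_, fun hc => ?_⟩
    · rw [lap_add, lap_smul, hind]
      split_ifs with h
      · subst h
        have := hfb hx
        nlinarith [Int.natCast_nonneg (G.valence x)]
      · have := hf x hx
        nlinarith [Int.natCast_nonneg (G.valence b), Int.natCast_nonneg (G.mult x b)]
    · rw [lap_add, lap_smul, hind, if_neg hne]
      have := hf c hc
      have h3 : (0 : ℤ) < G.mult c b := by exact_mod_cast hpos
      nlinarith [Int.natCast_nonneg (G.valence b)]

lemma exists_nonneg_off (G : Multigraph V) (hG : G.Connected) (q : V) (D : V → ℤ) :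
    ∃ f : V → ℤ, f q = 0 ∧ ∀ x, x ≠ q → G.laplacian f x ≤ D x := by
  choose F hF hF' using G.exists_neg hG q
  have hN : ∃ N : ℤ, 0 ≤ N ∧ ∀ x, -N ≤ D x :=
    ⟨∑ x, |D x|, Finset.sum_nonneg fun _ _ => abs_nonneg _, fun x => by
      have := Finset.single_le_sum (f := fun x => |D x|) (fun _ _ => abs_nonneg _) (mem_univ x)
      have h2 := neg_abs_le (D x)
      linarith⟩
  obtain ⟨N, hN0, hN⟩ := hN
  let g : V → ℤ := fun x => N * ∑ i, F i x
  refine ⟨fun x => g x - g q, by simp, fun x hx => ?_⟩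
  have h1 : G.laplacian (fun x => g x - g q) x = N * ∑ i, G.laplacian (F i) x := by
    rw [← lap_sum, ← lap_smul]
    simp [laplacian, g]
  rw [h1]
  have h2 : ∑ i, G.laplacian (F i) x ≤ -1 := by
    rw [← Finset.add_sum_erase _ _ (mem_univ x)]
    have := hF' x hx
    have h3 : ∑ i ∈ univ.erase x, G.laplacian (F i) x ≤ 0 :=
      Finset.sum_nonpos fun i _ => hF i x hx
    omega
  have := hN x
  nlinarith

lemma sum_lap_set (G : Multigraph V) (f : V → ℤ) (U : Finset V) :
    ∑ w ∈ U, G.laplacian f w = ∑ w ∈ U, ∑ u ∈ Uᶜ, (G.mult w u : ℤ) * (f w - f u) := by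
  have h0 : ∑ w ∈ U, ∑ u ∈ U, (G.mult w u : ℤ) * (f w - f u) = 0 := by
    have h : ∑ w ∈ U, ∑ u ∈ U, (G.mult w u : ℤ) * (f w - f u) =
        - ∑ w ∈ U, ∑ u ∈ U, (G.mult w u : ℤ) * (f w - f u) := by
      conv_lhs => rw [Finset.sum_comm]
      rw [← Finset.sum_neg_distrib]
      refine Finset.sum_congr rfl fun w _ => ?_
      rw [← Finset.sum_neg_distrib]
      refine Finset.sum_congr rfl fun u _ => ?_
      rw [G.symm u w]; ring
    linarith
  have : ∀ w, G.laplacian f w = ∑ u ∈ U, (G.mult w u : ℤ) * (f w - f u) +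
      ∑ u ∈ Uᶜ, (G.mult w u : ℤ) * (f w - f u) := fun w => by
    rw [Finset.sum_add_sum_compl]; rfl
  simp only [this, Finset.sum_add_distrib, h0, zero_add]

lemma bounded (G : Multigraph V) (hG : G.Connected) (q : V) (D : V → ℤ) (w : V) :
    ∃ B : ℤ, 0 ≤ B ∧ ∀ f : V → ℤ, f q = 0 → (∀ x, x ≠ q → G.laplacian f x ≤ D x) → f w ≤ B := by
  induction hG.2 q w with
  | refl => exact ⟨0, le_rfl, fun f h _ => h.le⟩
  | @tail b c _ hbc ih =>
    have hpos : (1 : ℤ) ≤ G.mult c b := by rw [G.symm]; exact_mod_cast hbc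
    obtain ⟨B, hB, h⟩ := ih
    have hC : 0 ≤ ∑ x, |D x| := Finset.sum_nonneg fun _ _ => abs_nonneg _
    refine ⟨B + ∑ x, |D x|, by linarith, fun f hq hf => ?_⟩
    have hb := h f hq hf
    by_contra hcon
    push Not at hcon
    have hcb : f b < f c := by linarith
    set U := univ.filter fun x => f c ≤ f x with hU
    have hterm : ∀ x ∈ U, ∀ u ∈ Uᶜ, 0 ≤ (G.mult x u : ℤ) * (f x - f u) := by
      intro x hx u hu
      simp only [hU, mem_compl, mem_filter, mem_univ, true_and] at hx hu
      exact mul_nonneg (by positivity) (by omega)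
    have h1 : f c - f b ≤ ∑ x ∈ U, G.laplacian f x := by
      rw [sum_lap_set]
      have hcU : c ∈ U := by simp [hU]
      have hbU : b ∈ Uᶜ := by simp [hU, hcb]
      calc f c - f b ≤ (G.mult c b : ℤ) * (f c - f b) := by nlinarith
        _ ≤ ∑ u ∈ Uᶜ, (G.mult c u : ℤ) * (f c - f u) :=
          Finset.single_le_sum (f := fun u => (G.mult c u : ℤ) * (f c - f u)) (hterm c hcU) hbU
        _ ≤ _ := Finset.single_le_sum
          (f := fun x => ∑ u ∈ Uᶜ, (G.mult x u : ℤ) * (f x - f u))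
          (fun x hx => Finset.sum_nonneg (hterm x hx)) hcU
    have h2 : ∑ x ∈ U, G.laplacian f x ≤ ∑ x, |D x| := by
      calc ∑ x ∈ U, G.laplacian f x ≤ ∑ x ∈ U, |D x| := by
            refine Finset.sum_le_sum fun x hx => (hf x ?_).trans (le_abs_self _)
            rintro rfl
            simp only [hU, mem_filter, mem_univ, true_and] at hx
            omega
        _ ≤ _ := Finset.sum_le_sum_of_subset_of_nonneg (subset_univ _)
          fun _ _ _ => abs_nonneg _
    omega

lemma exists_reduced (G : Multigraph V) (hG : G.Connected) (q : V) (D : V → ℤ) :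
    ∃ f : V → ℤ, G.Reduced q (fun w => D w - G.laplacian f w) := by
  choose B hB0 hB using G.bounded hG q D
  let S : Set ℤ := {s | ∃ f : V → ℤ, f q = 0 ∧ (∀ x, x ≠ q → G.laplacian f x ≤ D x) ∧
    ∑ x, f x = s}
  have hne : S.Nonempty := by
    obtain ⟨f, h1, h2⟩ := G.exists_nonneg_off hG q D
    exact ⟨_, f, h1, h2, rfl⟩
  have hbdd : BddAbove S := by
    refine ⟨∑ x, B x, ?_⟩
    rintro s ⟨f, h1, h2, rfl⟩
    exact Finset.sum_le_sum fun x _ => hB x f h1 h2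
  obtain ⟨f, h1, h2, h3⟩ := Int.csSup_mem hne hbdd
  refine ⟨f, fun w hw => sub_nonneg.2 (h2 w hw), fun U hU hq => ?_⟩
  by_contra hcon
  push Not at hcon
  let g : V → ℤ := fun x => f x + if x ∈ U then 1 else 0
  have hg : ∑ x, g x ∈ S := by
    refine ⟨g, by simp [g, h1, hq], fun x hx => ?_, rfl⟩
    rw [lap_add]
    by_cases hxU : x ∈ U
    · have := hcon x hxU
      have h4 : G.laplacian (fun x => if x ∈ U then 1 else 0) x =
          ∑ u ∈ Uᶜ, (G.mult x u : ℤ) := by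
        simp only [laplacian, hxU, if_true]
        rw [← Finset.sum_add_sum_compl U, Finset.sum_eq_zero, zero_add]
        · refine Finset.sum_congr rfl fun u hu => ?_
          rw [mem_compl] at hu
          simp [hu]
        · intro u hu
          simp [hu]
      linarith
    · have := h2 x hx
      have h4 : G.laplacian (fun x => if x ∈ U then 1 else 0) x ≤ 0 := by
        refine Finset.sum_nonpos fun u _ => ?_
        simp only [hxU, if_false]
        split_ifs <;> simp
      linarith
  have h5 := le_csSup hbdd hg
  have h6 : ∑ x, g x = ∑ x, f x + U.card := by
    simp [g, Finset.sum_add_distrib]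
  have h7 := hU.card_pos
  have : sSup S = ∑ x, f x := h3.symm
  omega

lemma exists_order (G : Multigraph V) (q : V) (D : V → ℤ) (hD : G.Reduced q D) (hq : D q < 0) :
    ∃ p : V → ℤ, Function.Injective p ∧ ∀ w, D w ≤ G.nu p w := by
  have key : ∀ n : ℕ, n + 1 ≤ Fintype.card V → ∃ (B : Finset V) (p : V → ℤ), B.card = n + 1 ∧
      q ∈ B ∧ Set.InjOn p B ∧ (∀ w ∈ B, p w ≤ n) ∧
      ∀ w ∈ B, D w ≤ (∑ u ∈ B, if p u < p w then (G.mult w u : ℤ) else 0) - 1 := by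
    intro n
    induction n with
    | zero =>
      intro _
      exact ⟨{q}, fun _ => 0, by simp, by simp, by simp, by simp, by simp; omega⟩
    | succ n ih =>
      intro hn
      obtain ⟨B, p, hc, hqB, hinj, hle, hB⟩ := ih (by omega)
      have hU : (Bᶜ).Nonempty := by
        rw [← Finset.card_pos, Finset.card_compl]; omega
      obtain ⟨w, hw, hwD⟩ := hD.2 Bᶜ hU (by simpa using hqB)
      rw [mem_compl] at hw
      rw [compl_compl] at hwD
      have hne : ∀ x ∈ B, x ≠ w := fun x hx h => hw (h ▸ hx)
      refine ⟨insert w B, Function.update p w (n + 1), by rw [card_insert_of_notMem hw, hc],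
        mem_insert_of_mem hqB, ?_, ?_, ?_⟩
      · rw [coe_insert, Set.injOn_insert (by simpa using hw)]
        constructor
        · intro a ha b hb hab
          rw [Function.update_of_ne (hne a ha), Function.update_of_ne (hne b hb)] at hab
          exact hinj ha hb hab
        · rintro ⟨a, ha, hab⟩
          rw [Function.update_of_ne (hne a ha), Function.update_self] at hab
          have := hle a ha
          omega
      · intro x hx
        rcases mem_insert.1 hx with rfl | hx
        · simp
        · rw [Function.update_of_ne (hne x hx)]
          have := hle x hx
          push_cast; omega
      · intro x hx
        rw [sum_insert hw]
        rcases mem_insert.1 hx with rfl | hx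
        · have : ∑ u ∈ B, (if Function.update p x ((n : ℤ) + 1) u <
              Function.update p x ((n : ℤ) + 1) x then (G.mult x u : ℤ) else 0) =
              ∑ u ∈ B, (G.mult x u : ℤ) := by
            refine Finset.sum_congr rfl fun u hu => ?_
            rw [Function.update_of_ne (hne u hu), Function.update_self, if_pos]
            have := hle u hu
            omega
          rw [this]
          simp
          omega
        · have : ∑ u ∈ B, (if Function.update p w ((n : ℤ) + 1) u <
              Function.update p w ((n : ℤ) + 1) x then (G.mult x u : ℤ) else 0) =
              ∑ u ∈ B, (if p u < p x then (G.mult x u : ℤ) else 0) := by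
            refine Finset.sum_congr rfl fun u hu => ?_
            rw [Function.update_of_ne (hne u hu), Function.update_of_ne (hne x hx)]
          rw [this]
          have h1 := hB x hx
          have h2 : 0 ≤ (if Function.update p w ((n : ℤ) + 1) w <
              Function.update p w ((n : ℤ) + 1) x then (G.mult x w : ℤ) else 0) := by
            split_ifs <;> simp
          linarith
  have hpos : 0 < Fintype.card V := Fintype.card_pos_iff.2 ⟨q⟩
  obtain ⟨B, p, hc, -, hinj, -, hB⟩ := key (Fintype.card V - 1) (by omega)
  have hBu : B = univ := by
    rw [← Finset.card_eq_iff_eq_univ]; omega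
  subst hBu
  exact ⟨p, by simpa using hinj, fun w => hB w (mem_univ w)⟩

lemma not_winnable (G : Multigraph V) (hG : G.Connected) (D : V → ℤ) (hD : ¬ G.Winnable D) :
    ∃ p f : V → ℤ, Function.Injective p ∧ ∀ w, D w - G.laplacian f w ≤ G.nu p w := by
  obtain ⟨q⟩ := hG.1
  obtain ⟨f, hf⟩ := G.exists_reduced hG q D
  have hq : D q - G.laplacian f q < 0 := by
    by_contra hcon
    push Not at hcon
    refine hD ((G.winnable_iff D).2 ⟨f, fun w => ?_⟩)
    by_cases h : w = q
    · subst h; linarith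
    · have := hf.1 w h
      dsimp only at this
      linarith
  obtain ⟨p, hp, h⟩ := G.exists_order q _ hf hq
  exact ⟨p, f, hp, h⟩

lemma riemann (G : Multigraph V) (hG : G.Connected) (D : V → ℤ) (hD : G.genus ≤ ∑ w, D w) :
    G.Winnable D := by
  by_contra h
  obtain ⟨p, f, hp, hle⟩ := G.not_winnable hG D h
  have h1 := Finset.sum_le_sum fun w (_ : w ∈ univ) => hle w
  rw [Finset.sum_sub_distrib, sum_lap, sum_nu _ _ hp] at h1
  omega

lemma canonical_of_rank (G : Multigraph V) (hG : G.Connected) (D : V → ℤ)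
    (hdeg : ∑ w, D w = 2 * G.genus - 2)
    (hr : ∀ E : V → ℤ, Effective E → ∑ w, E w ≤ G.genus - 1 →
      G.Winnable (fun w => D w - E w)) :
    ∃ f : V → ℤ, ∀ w, G.canonical w = D w + G.laplacian f w := by
  have := hG.1
  have hw : G.Winnable (fun w => G.canonical w - D w) := by
    by_contra h
    obtain ⟨p, f, hp, hle⟩ := G.not_winnable hG _ h
    have := hr (fun w => G.nu p w - (G.canonical w - D w) + G.laplacian f w)
      (fun w => by have := hle w; dsimp only at *; linarith) (by
        rw [Finset.sum_add_distrib, Finset.sum_sub_distrib, Finset.sum_sub_distrib, sum_lap,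
          sum_nu _ _ hp, sum_canonical, hdeg]
        linarith)
    rw [winnable_iff] at this
    obtain ⟨g, hg⟩ := this
    refine G.nu_not_winnable (fun x => - p x) ((G.winnable_iff _).2
      ⟨fun x => g x + f x, fun w => ?_⟩)
    rw [lap_add]
    have h1 := hg w
    have h2 := G.nu_add p hp w
    linarith
  obtain ⟨f, hf⟩ := (G.winnable_iff _).1 hw
  refine ⟨f, fun w => ?_⟩
  have hz : ∑ w, (G.canonical w - D w - G.laplacian f w) = 0 := by
    rw [Finset.sum_sub_distrib, Finset.sum_sub_distrib, sum_lap, sum_canonical, hdeg]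
    ring
  have := (Finset.sum_eq_zero_iff_of_nonneg fun w _ => sub_nonneg.2 (hf w)).1 hz w (mem_univ w)
  linarith

lemma exists_sub (E : V → ℤ) (hE : Effective E) (d : ℕ) (hd : (d : ℤ) ≤ ∑ w, E w) :
    ∃ F : V → ℤ, Effective F ∧ (∀ w, F w ≤ E w) ∧ ∑ w, F w = d := by
  induction d with
  | zero => exact ⟨fun _ => 0, fun _ => le_rfl, hE, by simp⟩
  | succ d ih =>
    obtain ⟨F, h1, h2, h3⟩ := ih (by push_cast at hd; omega)
    have : ∃ w, F w < E w := by
      by_contra hcon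
      push Not at hcon
      have := Finset.sum_le_sum fun w (_ : w ∈ univ) => hcon w
      push_cast at hd
      omega
    obtain ⟨w, hw⟩ := this
    refine ⟨fun x => F x + if x = w then 1 else 0, fun x => ?_, fun x => ?_, ?_⟩
    · have := h1 x
      dsimp only; split_ifs <;> omega
    · have := h2 x
      dsimp only
      split_ifs with h
      · subst h; omega
      · omega
    · rw [Finset.sum_add_distrib, h3]; simp

end Multigraph

open Multigraph

lemma lap_inl (G' : Multigraph V) (v : V) (k n : ℕ) (f : V ⊕ Fin n → ℤ) (a : V) :
    (attachComplete G' v k n).laplacian f (Sum.inl a) =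
      G'.laplacian (fun x => f (Sum.inl x)) a +
        if a = v then ∑ i, ((k : ℤ) + 1) * (f (Sum.inl v) - f (Sum.inr i)) else 0 := by
  simp only [laplacian, Fintype.sum_sum_type, attachComplete]
  congr 1
  split_ifs with h
  · subst h; simp
  · simp

lemma lap_inr (G' : Multigraph V) (v : V) (k n : ℕ) (f : V ⊕ Fin n → ℤ) (i : Fin n) :
    (attachComplete G' v k n).laplacian f (Sum.inr i) =
      ((k : ℤ) + 1) * (f (Sum.inr i) - f (Sum.inl v)) +
        ∑ j, (f (Sum.inr i) - f (Sum.inr j)) := by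
  simp only [laplacian, Fintype.sum_sum_type, attachComplete]
  congr 1
  · simp
  · refine Finset.sum_congr rfl fun j _ => ?_
    by_cases h : i = j
    · subst h; simp
    · simp [h]

/-- The divisor `(k+1) v + ∑ u_i`. -/
def baseDiv (v : V) (k n : ℕ) : V ⊕ Fin n → ℤ
  | Sum.inl a => if a = v then (k : ℤ) + 1 else 0
  | Sum.inr _ => 1

/-- Indicator function of the vertex `u` of `K_n`. -/
def indU (V : Type*) {n : ℕ} (u : Fin n) : V ⊕ Fin n → ℤ
  | Sum.inl _ => 0
  | Sum.inr i => if i = u then 1 else 0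

lemma lap_indU (G' : Multigraph V) (v : V) (k n : ℕ) (u : Fin n) (w : V ⊕ Fin n) :
    (attachComplete G' v k n).laplacian (indU V u) w =
      ((k : ℤ) + n + 1) * indU V u w - baseDiv v k n w := by
  rcases w with a | i
  · rw [lap_inl]
    simp only [indU, baseDiv, laplacian]
    split_ifs
    · rw [← Finset.mul_sum]; simp
    · simp
  · rw [lap_inr]
    simp only [indU, baseDiv]
    rw [Finset.sum_sub_distrib]
    simp
    split_ifs <;> ring

/-- Indicator function of `K_n`. -/
def indK (V : Type*) (n : ℕ) : V ⊕ Fin n → ℤ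
  | Sum.inl _ => 0
  | Sum.inr _ => 1

lemma lap_indK (G' : Multigraph V) (v : V) (k n : ℕ) (w : V ⊕ Fin n) :
    (attachComplete G' v k n).laplacian (indK V n) w =
      ((k : ℤ) + 1) * baseDiv v k n w -
        Sum.elim (fun a => if a = v then ((k : ℤ) + 1) * ((k : ℤ) + n + 1) else 0)
          (fun _ => 0) w := by
  rcases w with a | i
  · rw [lap_inl]
    simp only [indK, baseDiv, laplacian, Sum.elim_inl]
    split_ifs
    · simp; ring
    · simp
  · rw [lap_inr]
    simp [indK, baseDiv]

/-- Extension of a function on `G'` to `G`. -/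
def extF (v : V) (n : ℕ) (f : V → ℤ) : V ⊕ Fin n → ℤ := Sum.elim f (fun _ => f v)

lemma lap_extF (G' : Multigraph V) (v : V) (k n : ℕ) (f : V → ℤ) (w : V ⊕ Fin n) :
    (attachComplete G' v k n).laplacian (extF v n f) w =
      Sum.elim (G'.laplacian f) (fun _ => 0) w := by
  rcases w with a | i
  · rw [lap_inl]; simp [extF]
  · rw [lap_inr]; simp [extF]

lemma winnable_ext (G' : Multigraph V) (v : V) (k n : ℕ) (D : V → ℤ) (h : G'.Winnable D)
    (F : V ⊕ Fin n → ℤ) (hF : ∀ a, D a ≤ F (Sum.inl a)) (hF' : ∀ i, 0 ≤ F (Sum.inr i)) :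
    (attachComplete G' v k n).Winnable F := by
  rw [winnable_iff] at *
  obtain ⟨f, hf⟩ := h
  refine ⟨extF v n f, ?_⟩
  rintro (a | i)
  · rw [lap_extF]; exact (hf a).trans (hF a)
  · rw [lap_extF]; exact hF' i

lemma main_rank (G' : Multigraph V) (hG' : G'.Connected)
    (k : ℕ) (hgenus : 2 * G'.genus = (k : ℤ) * (k - 1)) (v : V)
    (hrank : ∀ l : ℤ, 0 ≤ l → l ≤ (k : ℤ) → ∀ E : V → ℤ, Effective E →
      2 * ∑ w, E w ≤ l * (l + 3) →
      G'.Winnable (fun w => (if w = v then l * ((k : ℤ) + 1) else 0) - E w))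
    (n : ℕ) (l : ℕ) : l ≤ k + n → ∀ E : V ⊕ Fin n → ℤ, Effective E →
      2 * ∑ w, E w ≤ (l : ℤ) * (l + 3) →
      (attachComplete G' v k n).Winnable (fun w => (l : ℤ) * baseDiv v k n w - E w) := by
  induction l using Nat.strong_induction_on with
  | _ l ih =>
  intro hl E hE hdeg
  have hsum : ∑ w, E w = ∑ a, E (Sum.inl a) + ∑ i, E (Sum.inr i) := Fintype.sum_sum_type E
  have hs0 : 0 ≤ ∑ i, E (Sum.inr i) := Finset.sum_nonneg fun i _ => hE _
  have hs1 : 0 ≤ ∑ a, E (Sum.inl a) := Finset.sum_nonneg fun i _ => hE _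
  by_cases hA : ∃ i, (l : ℤ) + 1 ≤ E (Sum.inr i)
  · obtain ⟨u, hu⟩ := hA
    have hu2 : E (Sum.inr u) ≤ ∑ i, E (Sum.inr i) :=
      Finset.single_le_sum (f := fun i => E (Sum.inr i)) (fun i _ => hE _) (mem_univ u)
    obtain ⟨l', rfl⟩ : ∃ l', l = l' + 1 := by
      refine ⟨l - 1, ?_⟩
      rcases Nat.eq_zero_or_pos l with h | h
      · subst h; simp at hdeg hu; omega
      · omega
    have hsu : ∑ w, indU V u w = 1 := by
      rw [Fintype.sum_sum_type]; simp [indU]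
    have h1 := ih l' (by omega) (by omega) (fun w => E w - ((l' : ℤ) + 2) * indU V u w)
      (by
        rintro (a | i)
        · simpa [indU] using hE _
        · have := hE (Sum.inr i)
          simp only [indU]
          split_ifs with h
          · subst h; push_cast at hu; linarith
          · linarith)
      (by
        rw [Finset.sum_sub_distrib, ← Finset.mul_sum, hsu]
        push_cast at hdeg
        linarith)
    have h2 : (attachComplete G' v k n).Winnable
        (fun w => baseDiv v k n w - ((l' : ℤ) + 2) * indU V u w) := by
      rw [winnable_iff]
      refine ⟨fun x => (-1) * indU V u x, fun w => ?_⟩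
      rw [lap_smul, lap_indU]
      have h3 : 0 ≤ indU V u w := by
        rcases w with a | i
        · simp [indU]
        · simp only [indU]; split_ifs <;> simp
      have h4 : (l' : ℤ) + 1 ≤ k + n := by exact_mod_cast hl
      nlinarith
    refine winnable_add _ h1 h2 fun w => ?_
    push_cast; ring
  push Not at hA
  have hB : ∀ j : ℤ, j = l → G'.Winnable (fun w => (if w = v then j * ((k : ℤ) + 1) else 0) -
        E (Sum.inl w)) →
      (attachComplete G' v k n).Winnable (fun w => (l : ℤ) * baseDiv v k n w - E w) := by
    rintro j rfl h
    refine winnable_ext G' v k n _ h _ (fun a => ?_) (fun i => ?_)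
    · simp only [baseDiv]
      split_ifs <;> simp
    · have := hA i
      simp only [baseDiv]
      linarith
  by_cases hlk : l ≤ k
  · exact hB l rfl (hrank l (by positivity) (by exact_mod_cast hlk) _ (fun a => hE _) (by linarith))
  push Not at hlk
  by_cases hC : ∑ a, E (Sum.inl a) ≤ l * ((k : ℤ) + 1) - G'.genus
  · refine hB l rfl (G'.riemann hG' _ ?_)
    rw [Finset.sum_sub_distrib]
    simp
    linarith
  push Not at hC
  obtain ⟨l', rfl⟩ : ∃ l', l = l' + (k + 1) := ⟨l - (k + 1), by omega⟩
  push_cast at hC hdeg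
  have hl' : (l' : ℤ) + 1 ≤ n := by omega
  set δ : ℤ := ((l' : ℤ) + (k + 1)) * ((k : ℤ) + 1) - G'.genus + 1 with hδ
  have hδ0 : 0 ≤ δ := by nlinarith
  lift δ to ℕ using hδ0 with d
  obtain ⟨F, hF1, hF2, hF3⟩ := exists_sub (fun a => E (Sum.inl a)) (fun a => hE _) d (by omega)
  have hFs : ∑ w : V ⊕ Fin n, Sum.elim F (fun _ => 0) w = d := by
    rw [Fintype.sum_sum_type]; simpa using hF3
  have h1 := ih l' (by omega) (by omega) (fun w => E w - Sum.elim F (fun _ => 0) w)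
    (by
      rintro (a | i)
      · simpa using hF2 a
      · simpa using hE _)
    (by
      rw [Finset.sum_sub_distrib, hFs]
      nlinarith)
  have h2 : G'.Winnable (fun w => (if w = v then ((k : ℤ) + 1) * ((k : ℤ) + n + 1) else 0)
      - F w) := by
    refine G'.riemann hG' _ ?_
    rw [Finset.sum_sub_distrib, hF3]
    simp
    nlinarith
  have h3 := winnable_ext G' v k n _ h2 (fun w => Sum.elim (fun a => if a = v then
    ((k : ℤ) + 1) * ((k : ℤ) + n + 1) else 0) (fun _ => 0) w - Sum.elim F (fun _ => 0) w)
    (fun a => by simp) (fun i => by simp)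
  have h4 : (attachComplete G' v k n).Winnable
      (fun w => ((k : ℤ) + 1) * baseDiv v k n w - Sum.elim (fun a => if a = v then
    ((k : ℤ) + 1) * ((k : ℤ) + n + 1) else 0) (fun _ => 0) w) := by
    rw [winnable_iff]
    exact ⟨indK V n, fun w => (lap_indK G' v k n w).le⟩
  refine winnable_add _ h1 (winnable_add _ h3 h4 fun w => rfl) fun w => ?_
  push_cast; ring

lemma two_choose (m : ℕ) : 2 * (Nat.choose m 2 : ℤ) = (m : ℤ) * (m - 1) := by
  induction m with
  | zero => simp
  | succ m ih =>
    rw [Nat.choose_succ_succ' m 1]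
    push_cast
    rw [Nat.choose_one_right]
    linarith

/-- Upper bound main lemma: with `G'` of genus `C(k,2)` satisfying the
rank hypothesis at `v`, and `G` obtained by attaching `K_n` to `v` along `k+1` edges:
(1) `g(G) = C(k+n,2)`; (2) `(k+n-2)(k+n+1)·u ∼ K_G` for every `u ∈ K_n`;
(3) `r(l(k+n+1)·u) ≥ l(l+3)/2` for `-2 ≤ l ≤ k+n` and every `u ∈ K_n`. -/
theorem stmt11 (G' : Multigraph V) (hG' : G'.Connected)
    (k : ℕ) (hgenus : G'.genus = (Nat.choose k 2 : ℤ)) (v : V)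
    (hrank : ∀ l : ℤ, 1 ≤ l → l ≤ (k : ℤ) - 2 →
      l * (l + 3) ≤ 2 * G'.rank (fun w => if w = v then l * ((k : ℤ) + 1) else 0))
    (n : ℕ) (hn : 1 ≤ n) :
    (attachComplete G' v k n).genus = (Nat.choose (k + n) 2 : ℤ) ∧
    (∀ u : Fin n,
      (attachComplete G' v k n).LinEquiv
        (fun w => if w = Sum.inr u then ((k : ℤ) + n - 2) * ((k : ℤ) + n + 1) else 0)
        (attachComplete G' v k n).canonical) ∧
    (∀ l : ℤ, -2 ≤ l → l ≤ (k : ℤ) + n → ∀ u : Fin n,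
      l * (l + 3) ≤ 2 * (attachComplete G' v k n).rank
        (fun w => if w = Sum.inr u then l * ((k : ℤ) + n + 1) else 0)) := by
  have := hG'.1
  have hg2 : 2 * G'.genus = (k : ℤ) * (k - 1) := by rw [hgenus]; exact two_choose k
  have hrank' : ∀ l : ℤ, 0 ≤ l → l ≤ (k : ℤ) → ∀ E : V → ℤ, Effective E →
      2 * ∑ w, E w ≤ l * (l + 3) →
      G'.Winnable (fun w => (if w = v then l * ((k : ℤ) + 1) else 0) - E w) := by
    intro l h0 hk E hE hd
    rcases h0.eq_or_lt with rfl | h1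
    · have h3 : 0 ≤ ∑ w, E w := Finset.sum_nonneg fun w _ => hE w
      have h2 : ∑ w, E w = 0 := by omega
      rw [Finset.sum_eq_zero_iff_of_nonneg fun w _ => hE w] at h2
      exact G'.winnable_of_nonneg fun w => by simp [h2 w (mem_univ w)]
    · by_cases h2 : l ≤ (k : ℤ) - 2
      · exact (G'.le_rank_iff _ (∑ w, E w)).1 (by have := hrank l h1 h2; omega) E hE le_rfl
      · refine G'.riemann hG' _ ?_
        rw [Finset.sum_sub_distrib]
        simp
        have : l = k - 1 ∨ l = k := by omega
        rcases this with rfl | rfl <;> nlinarith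
  have hcanon : ∃ f : V → ℤ, ∀ w, G'.canonical w =
      (if w = v then ((k : ℤ) - 2) * ((k : ℤ) + 1) else 0) + G'.laplacian f w := by
    refine G'.canonical_of_rank hG' _ ?_ ?_
    · simp; linarith
    · intro E hE hd
      have h3 : 0 ≤ ∑ w, E w := Finset.sum_nonneg fun w _ => hE w
      have hk : 2 ≤ k := by
        by_contra hcon
        have : k = 0 ∨ k = 1 := by omega
        rcases this with rfl | rfl <;> simp at hg2 <;> omega
      have hk' : (2 : ℤ) ≤ k := by exact_mod_cast hk
      exact hrank' ((k : ℤ) - 2) (by omega) (by omega) E hE (by linarith)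
  refine ⟨?_, fun u => ?_, ?_⟩
  · have h1 : ∑ x, ∑ y, (attachComplete G' v k n).mult x y =
        ∑ x, ∑ y, G'.mult x y + 2 * (n * (k + 1)) + n * (n - 1) := by
      simp only [Fintype.sum_sum_type, attachComplete, Finset.sum_add_distrib]
      have h2 : ∀ i : Fin n, ∑ j : Fin n, (if i = j then 0 else 1) = n - 1 := by
        intro i
        have : ∀ j : Fin n, (if i = j then 0 else 1) = (if j ≠ i then 1 else 0) := by
          intro j
          by_cases h : i = j
          · subst h; simp
          · simp [h, Ne.symm h]
        simp only [this]
        rw [← Finset.card_filter, Finset.filter_ne', Finset.card_erase_of_mem (mem_univ _)]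
        simp
      simp only [h2]
      rw [Finset.sum_comm (s := (univ : Finset V)) (t := (univ : Finset (Fin n)))]
      simp
      ring
    have h3 : ((n * (n - 1) : ℕ) : ℤ) = (n : ℤ) * (n - 1) := by
      push_cast [Nat.cast_sub hn]; ring
    have h4 := two_choose (k + n)
    have h5 := two_choose n
    rw [genus] at hgenus ⊢
    rw [h1]
    have h6 : ((n * (k + 1) : ℕ) : ℤ) = (n : ℤ) * (k + 1) := by push_cast; ring
    rw [genus] at hg2
    have h7 : 2 * (Nat.choose (k + n) 2 : ℤ) = (k : ℤ) * (k - 1) + 2 * ((n : ℤ) * (k + 1))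
        + (n : ℤ) * (n - 1) - 2 * n := by rw [h4]; push_cast; ring
    rw [Nat.cast_add, Nat.cast_add, h3, Nat.cast_mul, h6, Fintype.card_sum, Fintype.card_fin,
      Nat.cast_add]
    rw [← h5] at h7 ⊢
    push_cast at *
    omega
  · obtain ⟨f, hf⟩ := hcanon
    refine ⟨fun x => ((k : ℤ) + n - 2) * indU V u x + (-1) * extF v n f x, ?_⟩
    funext w
    rw [Pi.sub_apply, lap_add, lap_smul, lap_smul, lap_indU, lap_extF]
    rcases w with a | i
    · have h1 : (attachComplete G' v k n).canonical (Sum.inl a) = G'.canonical a +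
          if a = v then (n : ℤ) * (k + 1) else 0 := by
        simp only [canonical, valence, Fintype.sum_sum_type, attachComplete]
        split_ifs <;> simp <;> ring
      rw [h1, hf]
      simp only [indU, baseDiv, Sum.elim_inl]
      split_ifs <;> simp_all <;> ring
    · have h1 : (attachComplete G' v k n).canonical (Sum.inr i) = (k : ℤ) + n - 2 := by
        have h2 : ∑ j : Fin n, (if i = j then (0 : ℤ) else 1) = n - 1 := by
          have : ∀ j : Fin n, (if i = j then (0 : ℤ) else 1) = 1 - (if i = j then 1 else 0) := by
            intro j
            split_ifs <;> simp
          simp only [this, Finset.sum_sub_distrib]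
          simp
        simp only [canonical, valence, Fintype.sum_sum_type, attachComplete]
        push_cast
        rw [h2]
        simp
      rw [h1]
      simp only [indU, baseDiv, Sum.elim_inr, Sum.inr.injEq]
      split_ifs <;> ring
  · intro l hl hlm u
    haveI : Nonempty (V ⊕ Fin n) := ⟨Sum.inr u⟩
    obtain ⟨r, hr⟩ : ∃ r, l * (l + 3) = 2 * r := by
      have : Even (l * (l + 3)) := by
        rcases Int.even_or_odd l with h | h
        · exact h.mul_right _
        · exact (h.add_odd (by decide)).mul_left _
      obtain ⟨r, hr⟩ := this
      exact ⟨r, by linarith⟩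
    rw [hr]
    refine mul_le_mul_of_nonneg_left ?_ (by norm_num)
    rw [le_rank_iff]
    intro E hE hd
    have h0 : 0 ≤ ∑ w, E w := Finset.sum_nonneg fun w _ => hE w
    have hl0 : 0 ≤ l := by
      by_contra hcon
      have : l = -2 ∨ l = -1 := by omega
      rcases this with rfl | rfl <;> norm_num at hr <;> omega
    lift l to ℕ using hl0
    have h1 := main_rank G' hG' k hg2 v hrank' n l (by exact_mod_cast hlm) E hE (by linarith)
    rw [winnable_iff] at h1 ⊢
    obtain ⟨g, hg⟩ := h1
    refine ⟨fun x => g x + (l : ℤ) * indU V u x, fun w => ?_⟩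
    rw [lap_add, lap_smul, lap_indU]
    have h2 := hg w
    have h3 : (if w = Sum.inr u then (l : ℤ) * ((k : ℤ) + n + 1) else 0) =
        (l : ℤ) * (((k : ℤ) + n + 1) * indU V u w) := by
      rcases w with a | i
      · simp [indU]
      · simp only [indU, Sum.inr.injEq]
        split_ifs <;> ring
    rw [h3]
    linarith
end
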